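/- arXiv:2206.00561 — 2 statements merged into one kernel-verified Lean document; each statement's English description precedes it below -/
import Mathlib

section
/- Fix an integer k ≥ 1 and a finite color set C with |C| ≥ 3k − 1. If G is C-inextensible, then χ(G) ≥ |C| − 3k + 4. -/
open Finset

variable {V : Type*}

/-- A proper `C`-coloring of `G`: every vertex gets a color in `C` and adjacent
vertices get different colors. -/
def ProperColoring (G : SimpleGraph V) (C : Finset ℕ) (f : V → ℕ) : Prop :=
  (∀ v, f v ∈ C) ∧ ∀ ⦃u v⦄, G.Adj u v → f u ≠ f v

/-- A proper `C`-coloring `f` of `G` respects the template `(S, c, F)` if it agrees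
with `c` on `S` and avoids the forbidden list `F v` at each `v ∉ S`. -/
def Respects (G : SimpleGraph V) (C : Finset ℕ) (S : Finset V)
    (c : V → ℕ) (F : V → Finset ℕ) (f : V → ℕ) : Prop :=
  ProperColoring G C f ∧ (∀ v ∈ S, f v = c v) ∧ ∀ v ∉ S, f v ∉ F v

/-- `(S, c, F)` is a `C`-template on `G` (with `c` a proper `C`-coloring of `G[S]` and
`F v ⊆ C` for `v ∉ S`) witnessing the `C`-inextensibility of `G`:
its `k`-cost `k|S| + Σ_{v∉S}|F(v)|` is less than `2k²`, `|F(v)| ≤ k` for all `v ∉ S`,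
and no proper `C`-coloring of `G` respects it. -/
def Witnesses [Fintype V] [DecidableEq V] (k : ℕ) (G : SimpleGraph V) (C : Finset ℕ)
    (S : Finset V) (c : V → ℕ) (F : V → Finset ℕ) : Prop :=
  (∀ v ∈ S, c v ∈ C) ∧ (∀ u ∈ S, ∀ v ∈ S, G.Adj u v → c u ≠ c v) ∧
  (∀ v ∉ S, F v ⊆ C) ∧
  k * S.card + ∑ v ∈ Sᶜ, (F v).card < 2 * k ^ 2 ∧
  (∀ v ∉ S, (F v).card ≤ k) ∧
  ¬ ∃ f : V → ℕ, Respects G C S c F f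

/-- `G` is `C`-inextensible if some `C`-template witnesses its inextensibility. -/
def Inextensible [Fintype V] [DecidableEq V] (k : ℕ) (G : SimpleGraph V)
    (C : Finset ℕ) : Prop :=
  ∃ S c F, Witnesses k G C S c F

/-- `G` is minimally `C`-inextensible: it is `C`-inextensible but every proper induced
subgraph is `C`-extensible. -/
def MinInextensible [Fintype V] [DecidableEq V] (k : ℕ) (G : SimpleGraph V)
    (C : Finset ℕ) : Prop :=
  Inextensible k G C ∧ ∀ A : Finset V, A ≠ Finset.univ →
    ¬ Inextensible k (SimpleGraph.induce (↑A : Set V) G) C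

/-!
Vertices `v ∉ S` with `|F v| = k` can be moved into `S` at no extra cost, after giving them distinct
colors unused so far. Now all forbidden lists have fewer than `k` colors. Write `P` for the colors
that `c` does not use, `s = 2k - |S|`, and suppose that `G` has an `m`-coloring with
`m ≤ |C| - 3k + 3`. Inject its color classes into `P`. Averaging over the translates of this
injection for a group structure on `P`, some translate meets at most `(∑ |F v|) / |P| < s` conflicts
with the forbidden lists. The fewer than `s` vertices in conflict are then recolored with distinct
new colors, of which enough remain available by the choice of `m`.
-/

/-- `f` is a list coloring of the induced subgraph `G[U]` from the lists `L`: a proper coloring of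
`G[U]` in which every `v ∈ U` gets a color of `L v`. Here `f` is a function on all of `V`, with
arbitrary values outside `U`, so that colorings of disjoint parts can be glued. -/
def IsListColoringOn {α : Type*} (G : SimpleGraph V) (U : Finset V) (L : V → Finset α)
    (f : V → α) : Prop :=
  (∀ v ∈ U, f v ∈ L v) ∧ ∀ u ∈ U, ∀ v ∈ U, G.Adj u v → f u ≠ f v

namespace IsListColoringOn

variable {α : Type*} {G : SimpleGraph V} {U W : Finset V} {L L' : V → Finset α} {f g : V → α}

lemma mono (hf : IsListColoringOn G U L f) (hL : ∀ v ∈ U, L v ⊆ L' v) :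
    IsListColoringOn G U L' f :=
  ⟨fun v hv => hL v hv (hf.1 v hv), hf.2⟩

lemma of_injOn (hf : ∀ v ∈ U, f v ∈ L v) (hinj : Set.InjOn f U) : IsListColoringOn G U L f :=
  ⟨hf, fun _ hu _ hv huv h => huv.ne (hinj hu hv h)⟩

lemma piecewise [DecidableEq V] [DecidableEq α] (hf : IsListColoringOn G U L f)
    (hg : IsListColoringOn G W (fun v => L v \ U.image f) g) :
    IsListColoringOn G (U ∪ W) L (U.piecewise f g) := by
  have hW : ∀ v ∈ U ∪ W, v ∉ U → v ∈ W := fun v hv => (mem_union.1 hv).resolve_left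
  have hne : ∀ u ∈ U, ∀ w ∈ W, f u ≠ g w := fun u hu w hw h =>
    (mem_sdiff.1 (hg.1 w hw)).2 (h ▸ mem_image_of_mem f hu)
  refine ⟨fun v hv => ?_, fun u hu v hv huv => ?_⟩
  · by_cases hvU : v ∈ U
    · simpa [hvU] using hf.1 v hvU
    · simpa [hvU] using (mem_sdiff.1 (hg.1 v (hW v hv hvU))).1
  · by_cases huU : u ∈ U <;> by_cases hvU : v ∈ U <;>
      simp only [huU, hvU, piecewise_eq_of_mem, piecewise_eq_of_notMem, not_false_eq_true]
    · exact hf.2 u huU v hvU huv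
    · exact hne u huU v (hW v hv hvU)
    · exact (hne v hvU u (hW u hu huU)).symm
    · exact hg.2 u (hW u hu huU) v (hW v hv hvU) huv

end IsListColoringOn

lemma exists_injOn_mem_of_card_le {ι α : Type*} [Nonempty α] {T : Finset ι} {L : ι → Finset α}
    (hL : ∀ v ∈ T, #T ≤ #(L v)) : ∃ f : ι → α, Set.InjOn f T ∧ ∀ v ∈ T, f v ∈ L v := by
  classical
  have hall : ∀ A : Finset T, #A ≤ #(A.biUnion fun v => L v) := by
    intro A
    obtain rfl | ⟨v, hv⟩ := A.eq_empty_or_nonempty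
    · simp
    · calc #A ≤ #T := by simpa using card_le_univ A
        _ ≤ #(L v) := hL v v.2
        _ ≤ #(A.biUnion fun v => L v) := card_le_card (subset_biUnion_of_mem (fun v : T => L v) hv)
  obtain ⟨f, hinj, hf⟩ := (all_card_le_biUnion_card_iff_exists_injective _).1 hall
  let c : ι → α := fun v => if hv : v ∈ T then f ⟨v, hv⟩ else Classical.arbitrary α
  have hc : ∀ v (hv : v ∈ T), c v = f ⟨v, hv⟩ := fun v hv => dif_pos hv
  refine ⟨c, fun u hu v hv huv => ?_, fun v hv => hc v hv ▸ hf ⟨v, hv⟩⟩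
  rw [hc u hu, hc v hv] at huv
  exact congrArg Subtype.val (hinj huv)

lemma exists_card_filter_add_mem_mul_card_le {ι A : Type*} [AddGroup A] [Fintype A] [DecidableEq A]
    (U : Finset ι) (y : ι → A) (F : ι → Finset A) :
    ∃ t, #{v ∈ U | y v + t ∈ F v} * Fintype.card A ≤ ∑ v ∈ U, #(F v) := by
  have hcount : ∑ t, #{v ∈ U | y v + t ∈ F v} = ∑ v ∈ U, #(F v) := by
    calc ∑ t, #{v ∈ U | y v + t ∈ F v}
        = ∑ v ∈ U, #{t | y v + t ∈ F v} :=
          sum_card_bipartiteAbove_eq_sum_card_bipartiteBelow fun t v => y v + t ∈ F v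
      _ = ∑ v ∈ U, #(F v) := sum_congr rfl fun v _ => card_equiv (Equiv.addLeft (y v)) (by simp)
  obtain ⟨t, -, ht⟩ := exists_le_of_sum_le (s := (univ : Finset A))
    (f := fun t => #{v ∈ U | y v + t ∈ F v} * Fintype.card A) (g := fun _ => ∑ v ∈ U, #(F v))
    univ_nonempty (by rw [← sum_mul, hcount, sum_const, card_univ, smul_eq_mul, mul_comm])
  exact ⟨t, ht⟩

lemma exists_embedding_card_filter_mem_mul_card_le {ι α : Type*} [Fintype ι] [DecidableEq α]
    (U : Finset V) (g : V → ι) (F : V → Finset α) {P : Finset α} (hι : Fintype.card ι ≤ #P) :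
    ∃ x : ι ↪ P, #{v ∈ U | (x (g v) : α) ∈ F v} * #P ≤ ∑ v ∈ U, #(F v) := by
  obtain ⟨x⟩ : Nonempty (ι ↪ P) := Function.Embedding.nonempty_of_card_le (by simpa using hι)
  obtain rfl | hP := P.eq_empty_or_nonempty
  · exact ⟨x, by simp⟩
  have : NeZero #P := ⟨hP.card_pos.ne'⟩
  let _ : AddGroup P := (Fintype.equivOfCardEq (by simp [ZMod.card]) : P ≃ ZMod #P).addGroup
  obtain ⟨t, ht⟩ := exists_card_filter_add_mem_mul_card_le U (fun v => x (g v))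
    fun v => (F v).subtype (· ∈ P)
  refine ⟨x.trans (Equiv.addRight t).toEmbedding, ?_⟩
  calc #{v ∈ U | ((x (g v) + t : P) : α) ∈ F v} * #P
      = #{v ∈ U | x (g v) + t ∈ (F v).subtype (· ∈ P)} * Fintype.card P := by
        simp only [mem_subtype, Fintype.card_coe]
    _ ≤ ∑ v ∈ U, #((F v).subtype (· ∈ P)) := ht
    _ ≤ ∑ v ∈ U, #(F v) := sum_le_sum fun v _ => by
        rw [card_subtype]
        exact card_filter_le _ _

lemma card_add_one_le_card_sdiff_sdiff {α : Type*} [DecidableEq α] (P : Finset α) {A B : Finset α}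
    {a : α} (hA : a ∈ A) (hB : a ∈ B) : #P + 1 ≤ #((P \ A) \ B) + #A + #B := by
  have hinter : 0 < #(A ∩ B) := card_pos.2 ⟨a, mem_inter.2 ⟨hA, hB⟩⟩
  have hunion := card_union_add_card_inter A B
  have hsdiff : #P - #(A ∪ B) ≤ #((P \ A) \ B) :=
    (le_card_sdiff _ _).trans_eq (by rw [sdiff_sdiff_left, sup_eq_union])
  omega

lemma exists_isListColoringOn_sdiff_of_sum_lt {ι α : Type*} [Fintype ι] [DecidableEq α]
    {G : SimpleGraph V} (g : G.Coloring ι) {U : Finset V} {P : Finset α} {F : V → Finset α} {s : ℕ}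
    (hι : Fintype.card ι ≤ #P) (hsum : ∑ v ∈ U, #(F v) < s * #P)
    (hcard : ∀ v ∈ U, Fintype.card ι + #(F v) + s ≤ #P + 2) :
    ∃ f, IsListColoringOn G U (fun v => P \ F v) f := by
  classical
  obtain ⟨x, hx⟩ := exists_embedding_card_filter_mem_mul_card_le U g F hι
  set B := {v ∈ U | (x (g v) : α) ∈ F v} with hB
  have hBs : #B < s := lt_of_mul_lt_mul_right (hx.trans_lt hsum) (Nat.zero_le _)
  let X : Finset α := univ.image fun i => (x i : α)
  have hlist : ∀ v ∈ B, #B ≤ #((P \ F v) \ X) := by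
    intro v hv
    obtain ⟨hvU, hvF⟩ := mem_filter.1 hv
    -- The color causing the conflict at `v` is both forbidden and used, which saves one color.
    have hvX : (x (g v) : α) ∈ X := mem_image_of_mem _ (mem_univ _)
    have hsave := card_add_one_le_card_sdiff_sdiff P hvF hvX
    have hX : #X ≤ Fintype.card ι := card_image_le
    have := hcard v hvU
    omega
  have : Nonempty α := by
    have hpos : 0 < #P := Nat.pos_of_ne_zero fun h => by simp [h] at hsum
    exact (card_pos.1 hpos).to_type
  obtain ⟨b, hbinj, hb⟩ := exists_injOn_mem_of_card_le hlist
  have hgood : IsListColoringOn G (U \ B) (fun v => P \ F v) fun v => x (g v) := by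
    refine ⟨fun v hv => ?_, fun u _ v _ huv h => g.valid huv (x.injective (Subtype.ext h))⟩
    have hvF : (x (g v) : α) ∉ F v := by
      simp only [hB, mem_sdiff, mem_filter, not_and] at hv
      exact hv.2 hv.1
    exact mem_sdiff.2 ⟨(x (g v)).2, hvF⟩
  have hbad : IsListColoringOn G B
      (fun v => (P \ F v) \ (U \ B).image fun v => (x (g v) : α)) b :=
    (IsListColoringOn.of_injOn hb hbinj).mono fun v _ => sdiff_subset_sdiff Subset.rfl <|
      image_subset_iff.2 fun v _ => mem_image_of_mem _ (mem_univ (g v))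
  have hU : U \ B ∪ B = U := sdiff_union_of_subset (filter_subset _ _)
  exact ⟨_, hU ▸ hgood.piecewise hbad⟩

lemma exists_properColoring_apply_eq {ι : Type*} [Fintype ι] {G : SimpleGraph V} (g : G.Coloring ι)
    {C : Finset ℕ} (hι : Fintype.card ι ≤ #C) (a : V) {x : ℕ} (hx : x ∈ C) :
    ∃ f, ProperColoring G C f ∧ f a = x := by
  obtain ⟨e⟩ : Nonempty (ι ↪ C) := Function.Embedding.nonempty_of_card_le (by simpa using hι)
  let p : ι ↪ C := e.trans (Equiv.swap (e (g a)) ⟨x, hx⟩).toEmbedding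
  exact ⟨fun v => p (g v), ⟨fun v => (p (g v)).2,
    fun u v huv h => g.valid huv (p.injective (Subtype.ext h))⟩, by simp [p]⟩

section TemplateCost

variable [Fintype V] [DecidableEq V] {α : Type*} {k : ℕ} {S T : Finset V} {F : V → Finset α}

/-- The `k`-cost of a template `(S, c, F)`, which does not depend on `c`. It is written out in the
definition of `Witnesses`. -/
def templateCost (k : ℕ) (S : Finset V) (F : V → Finset α) : ℕ :=
  k * #S + ∑ v ∈ Sᶜ, #(F v)

lemma templateCost_union_le (hST : Disjoint S T) (hT : ∀ v ∈ T, k ≤ #(F v)) :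
    templateCost k (S ∪ T) F ≤ templateCost k S F := by
  have hcompl : (S ∪ T)ᶜ = Sᶜ \ T := by rw [compl_union, sdiff_eq_inter_compl]
  have hsum : ∑ v ∈ Sᶜ \ T, #(F v) + ∑ v ∈ T, #(F v) = ∑ v ∈ Sᶜ, #(F v) :=
    sum_sdiff (subset_compl_iff_disjoint_left.2 hST)
  have hsumT : #T * k ≤ ∑ v ∈ T, #(F v) := card_nsmul_le_sum T _ k hT
  unfold templateCost
  rw [hcompl, card_union_of_disjoint hST]
  linarith

lemma sum_card_lt_of_templateCost_lt (h : templateCost k S F < 2 * k ^ 2) :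
    ∑ v ∈ Sᶜ, #(F v) < (2 * k - #S) * k := by
  rw [Nat.sub_mul, Nat.lt_sub_iff_add_lt]
  unfold templateCost at h
  linarith

lemma card_lt_of_templateCost_lt (h : templateCost k S F < 2 * k ^ 2) : #S < 2 * k := by
  by_contra! hS
  simpa [Nat.sub_eq_zero_of_le hS] using sum_card_lt_of_templateCost_lt h

end TemplateCost

namespace Witnesses

variable [Fintype V] [DecidableEq V] {k : ℕ} {G : SimpleGraph V} {C : Finset ℕ} {S : Finset V}
  {c : V → ℕ} {F : V → Finset ℕ}

lemma templateCost_lt (h : Witnesses k G C S c F) : templateCost k S F < 2 * k ^ 2 :=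
  h.2.2.2.1

lemma isListColoringOn (h : Witnesses k G C S c F) : IsListColoringOn G S (fun _ => C) c :=
  ⟨h.1, h.2.1⟩

lemma not_isListColoringOn_compl (h : Witnesses k G C S c F) (f : V → ℕ) :
    ¬ IsListColoringOn G Sᶜ (fun v => (C \ S.image c) \ F v) f := by
  intro hf
  have hglue : IsListColoringOn G (S ∪ Sᶜ) (fun _ => C) (S.piecewise c f) :=
    h.isListColoringOn.piecewise (hf.mono fun v _ => sdiff_subset)
  rw [union_compl] at hglue
  obtain ⟨-, -, -, -, -, hno⟩ := h
  refine hno ⟨S.piecewise c f, ⟨fun v => hglue.1 v (mem_univ v),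
    fun u v huv => hglue.2 u (mem_univ u) v (mem_univ v) huv⟩,
    fun v hv => piecewise_eq_of_mem _ _ _ hv, fun v hv => ?_⟩
  rw [piecewise_eq_of_notMem _ _ _ hv]
  exact (mem_sdiff.1 (hf.1 v (mem_compl.2 hv))).2

lemma union_piecewise (h : Witnesses k G C S c F) {T : Finset V} {d : V → ℕ} (hST : Disjoint S T)
    (hT : ∀ v ∈ T, k ≤ #(F v))
    (hd : IsListColoringOn G T (fun v => (C \ F v) \ S.image c) d) :
    Witnesses k G C (S ∪ T) (S.piecewise c d) F := by
  have hS : ∀ v ∉ S ∪ T, v ∉ S := fun v hv hvS => hv (mem_union_left T hvS)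
  have hglue : IsListColoringOn G (S ∪ T) (fun _ => C) (S.piecewise c d) :=
    h.isListColoringOn.piecewise (hd.mono fun v _ => sdiff_subset_sdiff sdiff_subset Subset.rfl)
  have hcost := (templateCost_union_le hST hT).trans_lt h.templateCost_lt
  obtain ⟨-, -, hFC, -, hFk, hno⟩ := h
  refine ⟨hglue.1, hglue.2, fun v hv => hFC v (hS v hv), hcost, fun v hv => hFk v (hS v hv), ?_⟩
  rintro ⟨f, hf, hfc, hfF⟩
  refine hno ⟨f, hf, fun v hv => ?_, fun v hv => ?_⟩
  · simpa [hv] using hfc v (mem_union_left T hv)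
  · by_cases hvT : v ∈ T
    · have hfv : f v = d v := by simpa [hv] using hfc v (mem_union_right S hvT)
      rw [hfv]
      exact (mem_sdiff.1 (mem_sdiff.1 (hd.1 v hvT)).1).2
    · exact hfF v (by simp [hv, hvT])

lemma exists_card_lt (h : Witnesses k G C S c F) (hC : 3 * k - 1 ≤ #C) :
    ∃ S' c', Witnesses k G C S' c' F ∧ ∀ v ∉ S', #(F v) < k := by
  set T := {v ∈ Sᶜ | #(F v) = k} with hT
  have hST : Disjoint S T := disjoint_compl_right.mono_right (filter_subset _ _)
  have hFT : ∀ v ∈ T, #(F v) = k := fun v hv => (mem_filter.1 hv).2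
  have hcard : #S + #T < 2 * k :=
    card_union_of_disjoint hST ▸ card_lt_of_templateCost_lt
      ((templateCost_union_le hST fun v hv => (hFT v hv).ge).trans_lt h.templateCost_lt)
  obtain ⟨d, hinj, hd⟩ : ∃ d : V → ℕ, Set.InjOn d T ∧ ∀ v ∈ T, d v ∈ (C \ F v) \ S.image c := by
    refine exists_injOn_mem_of_card_le fun v hv => ?_
    have := hFT v hv
    have := le_card_sdiff (F v) C
    have := le_card_sdiff (S.image c) (C \ F v)
    have := card_image_le (s := S) (f := c)
    omega
  refine ⟨S ∪ T, _, h.union_piecewise hST (fun v hv => (hFT v hv).ge) (.of_injOn hd hinj),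
    fun v hv => ?_⟩
  obtain ⟨-, -, -, -, hFk, -⟩ := h
  have hv' : v ∉ S ∧ (v ∉ S → #(F v) ≠ k) := by simpa [hT, not_or] using hv
  exact (hFk v hv'.1).lt_of_ne (hv'.2 hv'.1)

lemma not_colorable_of_card_lt (h : Witnesses k G C S c F) (hC : 3 * k - 1 ≤ #C)
    (hF : ∀ v ∉ S, #(F v) < k) {m : ℕ} (hm : m + 3 * k ≤ #C + 3) : ¬ G.Colorable m := by
  rintro ⟨g⟩
  have hS := card_lt_of_templateCost_lt h.templateCost_lt
  have hP : #C - #S ≤ #(C \ S.image c) :=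
    (Nat.sub_le_sub_left card_image_le _).trans (le_card_sdiff _ _)
  obtain ⟨rfl, hS1⟩ | hSk : k = 1 ∧ #S = 1 ∨ #S + 3 ≤ 3 * k := by omega
  · -- No color is forbidden, but the `m` classes need not fit into the remaining colors, so `c a`
    -- is reused for the class of `a`.
    obtain ⟨a, rfl⟩ := card_eq_one.1 hS1
    obtain ⟨hcC, -, -, -, -, hno⟩ := h
    obtain ⟨f, hf, hfa⟩ := exists_properColoring_apply_eq g (by simpa using hm) a
      (hcC a (mem_singleton_self a))
    refine hno ⟨f, hf, by simpa using hfa, fun v hv => ?_⟩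
    simp [card_eq_zero.1 (Nat.lt_one_iff.1 (hF v hv))]
  · have hsum : ∑ v ∈ Sᶜ, #(F v) < (2 * k - #S) * #(C \ S.image c) :=
      (sum_card_lt_of_templateCost_lt h.templateCost_lt).trans_le
        (Nat.mul_le_mul_left _ (by omega))
    obtain ⟨f, hf⟩ := exists_isListColoringOn_sdiff_of_sum_lt g
      (by rw [Fintype.card_fin]; omega) hsum fun v hv => by
        have := hF v (mem_compl.1 hv)
        rw [Fintype.card_fin]
        omega
    exact h.not_isListColoringOn_compl f hf

end Witnesses

/-- If `|C| ≥ 3k − 1` and `G` is `C`-inextensible, then `χ(G) ≥ |C| − 3k + 4`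
(stated without truncated subtraction as `|C| + 4 ≤ χ(G) + 3k`). -/
theorem inextensible_chromatic_weak [Fintype V] [DecidableEq V] (k : ℕ) (hk : 1 ≤ k)
    (G : SimpleGraph V) (C : Finset ℕ) (hC : 3 * k - 1 ≤ C.card)
    (h : Inextensible k G C) :
    ((C.card : ℕ∞)) + 4 ≤ G.chromaticNumber + ((3 * k : ℕ) : ℕ∞) := by
  obtain ⟨S, c, F, hSc⟩ := h
  obtain ⟨S', c', hSc', hF⟩ := hSc.exists_card_lt hC
  by_contra! hlt
  obtain ⟨n, hn⟩ : ∃ n : ℕ, (n : ℕ∞) = G.chromaticNumber :=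
    ENat.ne_top_iff_exists.1 fun htop => by simp [htop] at hlt
  rw [← hn] at hlt
  norm_cast at hlt
  exact hSc'.not_colorable_of_card_lt hC hF (by omega)
    (SimpleGraph.chromaticNumber_le_iff_colorable.1 hn.ge)
end

section
/- For every integer k ≥ 1, every graph G with choosability (list chromatic number) χ_ℓ(G) ≥ 3k contains a (k+1)-connected subgraph H with more than χ_ℓ(G) − k vertices and χ_ℓ(H) ≥ χ_ℓ(G) − 3k + 2. -/
variable {V : Type*}

/-- `G` is `n`-connected: it has more than `n` vertices and no cutset of fewer than `n`
vertices. -/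
def KConnected (G : SimpleGraph V) (n : ℕ) : Prop :=
  n < Nat.card V ∧ ∀ X : Set V, X.ncard < n →
    ¬ ∃ A B : Set V, A.Nonempty ∧ B.Nonempty ∧ Disjoint A B ∧ A ∪ B = Xᶜ ∧
        ∀ a ∈ A, ∀ b ∈ B, ¬ G.Adj a b

/-- `G` is `n`-choosable: for every assignment of lists of `n` colors to the vertices,
there is a proper coloring choosing each vertex's color from its list. -/
def Choosable (G : SimpleGraph V) (n : ℕ) : Prop :=
  ∀ L : V → Finset ℕ, (∀ v, (L v).card = n) →
    ∃ f : V → ℕ, (∀ v, f v ∈ L v) ∧ ∀ ⦃u v⦄, G.Adj u v → f u ≠ f v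

/-!
Let `N = n - 1` and suppose that every `(k + 1)`-connected induced subgraph with more than
`N + 1 - k` vertices is `(N + 2 - 3 * k)`-choosable. We color every finite set of vertices from
lists of size `N`, which by compactness contradicts `χ_ℓ(G) ≥ n`.

For the induction, some vertices `X` are already colored, and the lists on the uncolored vertices
`U` may have lost up to `k` of their `N` colors. Give a colored vertex weight `k` and an uncolored
one the number of its lost colors; the coloring extends as soon as the total weight is less than
`2 * k ^ 2`. An uncolored vertex that lost `k` colors is colored, a colored vertex with at most `k`
uncolored neighbors is deleted and its color struck from their lists, and neither operation
increases the weight. When neither applies, either the graph is small and can be colored greedily,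
or it is `(k + 1)`-connected and the hypothesis applies, or at most `k` vertices separate it
into two sides. One side then has weight less than `k ^ 2`; it is colored last, when the at most `k`
colored cut vertices add at most `k ^ 2` to its weight.
-/

open Finset SimpleGraph

section ListColoring

variable {G : SimpleGraph V}

theorem Choosable.exists_coloring {m : ℕ} (hG : Choosable G m) {L : V → Finset ℕ}
    (hL : ∀ v, m ≤ #(L v)) :
    ∃ f : V → ℕ, (∀ v, f v ∈ L v) ∧ ∀ ⦃u v⦄, G.Adj u v → f u ≠ f v := by
  choose S hSL hS using fun v ↦ exists_subset_card_eq (hL v)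
  obtain ⟨f, hfS, hf⟩ := hG S hS
  exact ⟨f, fun v ↦ hSL v (hfS v), hf⟩

theorem Choosable.mono {m n : ℕ} (hmn : m ≤ n) (hG : Choosable G m) : Choosable G n :=
  fun _ hL ↦ hG.exists_coloring fun v ↦ hmn.trans_eq (hL v).symm

theorem Choosable.of_isContained {W : Type*} {H : SimpleGraph W} {m : ℕ} (hG : Choosable G m)
    (hHG : H ⊑ G) : Choosable H m := by
  intro L hL
  obtain ⟨φ⟩ := hHG
  obtain ⟨f, hfL, hf⟩ := hG (Function.extend φ L fun _ ↦ range m) fun v ↦ by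
    by_cases hv : ∃ w, φ w = v
    · obtain ⟨w, rfl⟩ := hv
      exact (congrArg card (φ.injective.extend_apply L _ w)).trans (hL w)
    · simp [Function.extend_apply' _ _ _ hv]
  refine ⟨f ∘ φ, fun w ↦ ?_, fun u v huv ↦ hf (φ.toHom.map_adj huv)⟩
  exact φ.injective.extend_apply L _ w ▸ hfL (φ w)

theorem exists_listColoring_of_forall_finset {α : Type*} {L : V → Finset α}
    (h : ∀ U : Finset V, ∃ f : V → α,
      (∀ u ∈ U, f u ∈ L u) ∧ ∀ u ∈ U, ∀ v ∈ U, G.Adj u v → f u ≠ f v) :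
    ∃ f : V → α, (∀ v, f v ∈ L v) ∧ ∀ ⦃u v⦄, G.Adj u v → f u ≠ f v := by
  classical
  choose f hfL hf using h
  obtain ⟨g, hg⟩ := rado_selection_subtype (β := fun v ↦ L v)
    fun U v ↦ ⟨f U v, hfL U v v.2⟩
  refine ⟨fun v ↦ g v, fun v ↦ (g v).2, fun u v huv ↦ ?_⟩
  obtain ⟨U, hU, hgU⟩ := hg {u, v}
  have hu : u ∈ ({u, v} : Finset V) := by simp
  have hv : v ∈ ({u, v} : Finset V) := by simp
  simp only [hgU ⟨u, hu⟩, hgU ⟨v, hv⟩]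
  exact hf U u (hU hu) v (hU hv) huv

end ListColoring

section Extension

variable {α : Type*} {G : SimpleGraph V} {L : V → Finset α} {c : V → α} {X U : Finset V}

/-- The coloring `c` of `X` extends to a coloring of `U` from the lists `L`: some coloring `f` from
the lists is proper on `U` and in no conflict with `c`. Nothing is required of `c` itself, nor
of the values of `c` and `f` outside `X` and `U`. -/
def HasExtension (G : SimpleGraph V) (L : V → Finset α) (c : V → α) (X U : Finset V) : Prop :=
  ∃ f : V → α, (∀ u ∈ U, f u ∈ L u) ∧ (∀ u ∈ U, ∀ v ∈ U, G.Adj u v → f u ≠ f v) ∧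
    ∀ u ∈ U, ∀ x ∈ X, G.Adj u x → f u ≠ c x

theorem HasExtension.of_forall_adj_mem {Y : Finset V} (h : HasExtension G L c Y U)
    (hXY : ∀ u ∈ U, ∀ x ∈ X, G.Adj u x → x ∈ Y) : HasExtension G L c X U := by
  obtain ⟨f, hfL, hf, hfc⟩ := h
  exact ⟨f, hfL, hf, fun u hu x hx hux ↦ hfc u hu x (hXY u hu x hx hux) hux⟩

theorem hasExtension_singleton {u : V} (h : #X < #(L u)) : HasExtension G L c X {u} := by
  classical
  obtain ⟨a, haL, hac⟩ := exists_mem_notMem_of_card_lt_card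
    ((card_image_le (s := X) (f := c)).trans_lt h)
  refine ⟨fun _ ↦ a, by simpa, by simp, fun _ _ x hx _ hax ↦ hac (mem_image.2 ⟨x, hx, hax.symm⟩)⟩

theorem HasExtension.of_choosable {L : V → Finset ℕ} {c : V → ℕ} {m : ℕ}
    (hU : Choosable (G.induce (U : Set V)) m) (hL : ∀ u ∈ U, m + #X ≤ #(L u)) :
    HasExtension G L c X U := by
  classical
  obtain ⟨f, hfL, hf⟩ := hU.exists_coloring (L := fun u ↦ L u \ X.image c) fun u ↦ by
    have := le_card_sdiff (X.image c) (L u)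
    have := card_image_le (s := X) (f := c)
    have := hL u u.2
    omega
  refine ⟨fun v ↦ if hv : v ∈ U then f ⟨v, hv⟩ else 0, fun u hu ↦ ?_, fun u hu v hv huv ↦ ?_,
    fun u hu x hx _ ↦ ?_⟩
  · simpa [hu] using (mem_sdiff.1 (hfL ⟨u, hu⟩)).1
  · simpa [hu, hv] using hf (u := ⟨u, hu⟩) (v := ⟨v, hv⟩) huv
  · simp only [hu, dif_pos]
    exact fun hfx ↦ (mem_sdiff.1 (hfL ⟨u, hu⟩)).2 (mem_image.2 ⟨x, hx, hfx.symm⟩)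

theorem HasExtension.union [DecidableEq V] {U₁ U₂ : Finset V} (hX : Disjoint X U₁)
    (h₁ : HasExtension G L c X U₁) (h₂ : ∀ c', HasExtension G L c' (X ∪ U₁) U₂) :
    HasExtension G L c X (U₁ ∪ U₂) := by
  obtain ⟨f, hfL, hf, hfc⟩ := h₁
  obtain ⟨g, hgL, hg, hgc⟩ := h₂ fun v ↦ if v ∈ U₁ then f v else c v
  have hgf : ∀ v ∈ U₂, ∀ u ∈ U₁, G.Adj v u → g v ≠ f u := fun v hv u hu hvu ↦ by
    simpa [hu] using hgc v hv u (mem_union_right X hu) hvu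
  have hgx : ∀ v ∈ U₂, ∀ x ∈ X, G.Adj v x → g v ≠ c x := fun v hv x hx hvx ↦ by
    simpa [disjoint_left.1 hX hx] using hgc v hv x (mem_union_left U₁ hx) hvx
  refine ⟨fun v ↦ if v ∈ U₁ then f v else g v, ?_, fun u hu v hv huv ↦ ?_, ?_⟩
  · grind
  · have hvu := huv.symm
    grind
  · grind

theorem HasExtension.of_erase [DecidableEq V] {u : V} (hX : Disjoint X U) (hu : u ∈ U)
    (hXu : #X < #(L u))
    (h : ∀ c', HasExtension G L c' (insert u X) (U.erase u)) : HasExtension G L c X U := by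
  have huX : u ∉ X := disjoint_right.1 hX hu
  rw [← insert_erase hu, insert_eq]
  refine (hasExtension_singleton hXu).union (disjoint_singleton_right.2 huX) fun c' ↦ ?_
  rw [union_comm, ← insert_eq]
  exact h c'

theorem hasExtension_of_card_add_card_le (hX : Disjoint X U) (hL : ∀ u ∈ U, #X + #U ≤ #(L u)) :
    HasExtension G L c X U := by
  classical
  induction U using Finset.induction_on generalizing X c with
  | empty => exact ⟨c, by simp, by simp, by simp⟩
  | insert u U hu ih =>
    rw [card_insert_of_notMem hu] at hL
    have hX' : u ∉ X ∧ Disjoint X U := disjoint_insert_right.1 hX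
    refine .of_erase hX (mem_insert_self u U) (by grind) fun c' ↦ ?_
    rw [erase_insert hu]
    exact ih (disjoint_insert_left.2 ⟨hu, hX'.2⟩) (by grind)

/-- The lists left when the color `a` is struck from the lists of the neighbors of `y`. -/
def strikeColor [DecidableEq α] (G : SimpleGraph V) [DecidableRel G.Adj] (L : V → Finset α)
    (y : V) (a : α) (v : V) : Finset α :=
  if G.Adj v y then (L v).erase a else L v

theorem HasExtension.of_strikeColor [DecidableEq V] [DecidableEq α] [DecidableRel G.Adj] {y : V}
    (h : HasExtension G (strikeColor G L y (c y)) c (X.erase y) U) : HasExtension G L c X U := by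
  obtain ⟨f, hfL, hf, hfc⟩ := h
  unfold strikeColor at hfL
  refine ⟨f, fun u hu ↦ ?_, hf, fun u hu x hx hux ↦ ?_⟩
  · grind
  · rcases eq_or_ne x y with rfl | hxy
    · grind
    · exact hfc u hu x (mem_erase.2 ⟨hxy, hx⟩) hux

end Extension

section Separation

variable {G : SimpleGraph V} {W A B : Finset V}

/-- `A` and `B` are the two sides of a separation of `G[W]`. The separating set `W \ (A ∪ B)` is not
part of either side. -/
structure IsSeparation (G : SimpleGraph V) (W A B : Finset V) : Prop where
  left_subset : A ⊆ W
  right_subset : B ⊆ W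
  left_nonempty : A.Nonempty
  right_nonempty : B.Nonempty
  disjoint : Disjoint A B
  not_adj : ∀ a ∈ A, ∀ b ∈ B, ¬ G.Adj a b

theorem IsSeparation.symm (h : IsSeparation G W A B) : IsSeparation G W B A where
  left_subset := h.right_subset
  right_subset := h.left_subset
  left_nonempty := h.right_nonempty
  right_nonempty := h.left_nonempty
  disjoint := h.disjoint.symm
  not_adj b hb a ha hba := h.not_adj a ha b hb hba.symm

theorem exists_isSeparation_of_not_kConnected [DecidableEq V] {n : ℕ} (hW : n < #W)
    (h : ¬ KConnected (G.induce (W : Set V)) n) :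
    ∃ A B, IsSeparation G W A B ∧ #(W \ (A ∪ B)) < n := by
  simp only [KConnected, Nat.card_eq_fintype_card, Fintype.card_coe, SetLike.coe_sort_coe, hW,
    true_and, not_forall, not_not] at h
  obtain ⟨S, hS, A, B, hA, hB, hAB, hcompl, hadj⟩ := h
  lift A to Finset W using A.toFinite
  lift B to Finset W using B.toFinite
  lift S to Finset W using S.toFinite
  let ι : W ↪ V := Function.Embedding.subtype _
  have hsub (T : Finset W) : T.map ι ⊆ W := fun v hv ↦ by
    obtain ⟨w, -, rfl⟩ := mem_map.1 hv
    exact w.2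
  refine ⟨A.map ι, B.map ι, ⟨hsub A, hsub B, ?_, ?_, ?_, ?_⟩, ?_⟩
  · simpa using hA
  · simpa using hB
  · simpa using hAB
  · simpa [ι] using hadj
  · have hcut : W \ (A.map ι ∪ B.map ι) ⊆ S.map ι := fun v hv ↦ by
      obtain ⟨hvW, hvAB⟩ := mem_sdiff.1 hv
      refine mem_map.2 ⟨⟨v, hvW⟩, ?_, rfl⟩
      by_contra hvS
      have hvAB' : (⟨v, hvW⟩ : W) ∈ (A ∪ B : Set W) := hcompl ▸ hvS
      rw [← map_union] at hvAB
      exact hvAB (mem_map.2 ⟨⟨v, hvW⟩, by simpa using hvAB', rfl⟩)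
    grw [hcut, card_map]
    simpa using hS

end Separation

section Light

variable {α : Type*} {G : SimpleGraph V} {L : V → Finset α} {c : V → α} {X U A B : Finset V}
  {k N : ℕ}

theorem IsSeparation.hasExtension [DecidableEq V] (hAB : IsSeparation G (X ∪ U) A B)
    (hXU : Disjoint X U) (h₁ : HasExtension G L c X (U \ A))
    (h₂ : ∀ c', HasExtension G L c' (X ∩ A ∪ (X ∪ U) \ (A ∪ B)) (U ∩ A)) :
    HasExtension G L c X U := by
  rw [← sdiff_union_inter U A]
  refine h₁.union (hXU.mono_right sdiff_subset) fun c' ↦ (h₂ c').of_forall_adj_mem ?_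
  intro u hu x hx hux
  have hxB : x ∉ B := fun hxB ↦ hAB.not_adj u (mem_of_mem_inter_right hu) x hxB hux
  grind

theorem IsSeparation.inter_nonempty [DecidableEq V] [DecidableRel G.Adj]
    (hAB : IsSeparation G (X ∪ U) A B) (hcut : #((X ∪ U) \ (A ∪ B)) ≤ k)
    (hX : ∀ y ∈ X, k < #{u ∈ U | G.Adj u y}) : (U ∩ A).Nonempty := by
  obtain ⟨a, ha⟩ := hAB.left_nonempty
  by_contra! hUA
  have hAU : ∀ ⦃v⦄, v ∈ A → v ∉ U := disjoint_right.1 (disjoint_iff_inter_eq_empty.2 hUA)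
  have haX : a ∈ X := (mem_union.1 (hAB.left_subset ha)).resolve_right (hAU ha)
  have hsub : {u ∈ U | G.Adj u a} ⊆ (X ∪ U) \ (A ∪ B) := fun u hu ↦ by
    have hub : u ∉ B := fun hub ↦ hAB.not_adj a ha u hub (mem_filter.1 hu).2.symm
    grind
  exact (hX a haX).not_ge ((card_le_card hsub).trans hcut)

theorem IsSeparation.two_mul_card_add_card_lt [DecidableEq V]
    (hAB : IsSeparation G (X ∪ U) A B) (hXU : Disjoint X U) :
    2 * #(U ∩ A) + #(X ∩ A ∪ (X ∪ U) \ (A ∪ B)) < 2 * #U + #X := by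
  have hB : 0 < #B := hAB.right_nonempty.card_pos
  have hUA : #(U ∩ A) ≤ #U := card_le_card inter_subset_left
  have hA : #(X ∩ A) + #(U ∩ A) = #A := by
    rw [← card_union_of_disjoint (hXU.mono inter_subset_left inter_subset_left),
      ← union_inter_distrib_right, inter_eq_right.2 hAB.left_subset]
  have hW : #((X ∪ U) \ (A ∪ B)) + (#A + #B) = #X + #U := by
    rw [← card_union_of_disjoint hAB.disjoint, ← card_union_of_disjoint hXU]
    exact card_sdiff_add_card_eq_card (union_subset hAB.left_subset hAB.right_subset)
  have := card_union_le (X ∩ A) ((X ∪ U) \ (A ∪ B))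
  omega

/-- The number of colors missing from the list of `u`, compared with a full list of size `N`
(and `0` for longer lists, by truncated subtraction). -/
def deficiency (N : ℕ) (L : V → Finset α) (u : V) : ℕ := N - #(L u)

/-- The potential of the induction: a colored vertex counts as much as `k` missing colors. -/
def weight (k N : ℕ) (L : V → Finset α) (X U : Finset V) : ℕ :=
  k * #X + ∑ u ∈ U, deficiency N L u

theorem weight_mono_right {U' : Finset V} (h : U' ⊆ U) : weight k N L X U' ≤ weight k N L X U :=
  Nat.add_le_add_left (sum_le_sum_of_subset h) _

theorem weight_insert_erase [DecidableEq V] {u : V} (huX : u ∉ X) (hu : u ∈ U)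
    (hk : deficiency N L u = k) : weight k N L (insert u X) (U.erase u) = weight k N L X U := by
  rw [weight, weight, card_insert_of_notMem huX, ← add_sum_erase U _ hu, hk]
  ring

theorem weight_union_left_le [DecidableEq V] (Y : Finset V) :
    weight k N L (X ∪ Y) U ≤ weight k N L X U + k * #Y := by
  have := Nat.mul_le_mul_left k (card_union_le X Y)
  simp only [weight]
  linarith

theorem weight_inter_add_weight_inter_le [DecidableEq V] (hAB : Disjoint A B) :
    weight k N L (X ∩ A) (U ∩ A) + weight k N L (X ∩ B) (U ∩ B) ≤ weight k N L X U := by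
  have hdisj (Y : Finset V) : Disjoint (Y ∩ A) (Y ∩ B) :=
    hAB.mono inter_subset_right inter_subset_right
  have hsub (Y : Finset V) : Y ∩ A ∪ Y ∩ B ⊆ Y := union_subset inter_subset_left inter_subset_left
  have hX : k * #(X ∩ A) + k * #(X ∩ B) ≤ k * #X := by
    rw [← mul_add, ← card_union_of_disjoint (hdisj X)]
    exact Nat.mul_le_mul_left k (card_le_card (hsub X))
  have hU : ∑ u ∈ U ∩ A, deficiency N L u + ∑ u ∈ U ∩ B, deficiency N L u ≤
      ∑ u ∈ U, deficiency N L u := by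
    rw [← sum_union (hdisj U)]
    exact sum_le_sum_of_subset (hsub U)
  simp only [weight]
  linarith

theorem deficiency_strikeColor_le [DecidableEq α] [DecidableRel G.Adj] (y : V) (a : α) (u : V) :
    deficiency N (strikeColor G L y a) u ≤ deficiency N L u + if G.Adj u y then 1 else 0 := by
  have := pred_card_le_card_erase (s := L u) (a := a)
  unfold deficiency strikeColor
  split_ifs <;> omega

theorem weight_strikeColor_erase_le [DecidableEq V] [DecidableEq α] [DecidableRel G.Adj] {y : V}
    (a : α) (hy : y ∈ X) (hyU : #{u ∈ U | G.Adj u y} ≤ k) :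
    weight k N (strikeColor G L y a) (X.erase y) U ≤ weight k N L X U := by
  have hsum : ∑ u ∈ U, deficiency N (strikeColor G L y a) u ≤ ∑ u ∈ U, deficiency N L u + k :=
    calc ∑ u ∈ U, deficiency N (strikeColor G L y a) u
      _ ≤ ∑ u ∈ U, (deficiency N L u + if G.Adj u y then 1 else 0) :=
        sum_le_sum fun u _ ↦ deficiency_strikeColor_le y a u
      _ = ∑ u ∈ U, deficiency N L u + #{u ∈ U | G.Adj u y} := by
        rw [sum_add_distrib, card_filter]
      _ ≤ ∑ u ∈ U, deficiency N L u + k := by gcongr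
  simp only [weight, ← card_erase_add_one hy]
  linarith

/-- The partial colorings that are extended by induction: the vertices of `X` are colored, those of
`U` still have to be colored from the lists `L`, and few colors are missing from these lists. -/
structure IsLight (k N : ℕ) (L : V → Finset α) (X U : Finset V) : Prop where
  disjoint : Disjoint X U
  deficiency_le : ∀ u ∈ U, deficiency N L u ≤ k
  weight_lt : weight k N L X U < 2 * k ^ 2

namespace IsLight

theorem card_lt (h : IsLight k N L X U) : #X < 2 * k := by
  refine Nat.lt_of_mul_lt_mul_left (a := k) ?_
  calc k * #X
    _ ≤ weight k N L X U := Nat.le_add_right _ _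
    _ < 2 * k ^ 2 := h.weight_lt
    _ = k * (2 * k) := by ring

theorem mono_right {U' : Finset V} (h : IsLight k N L X U) (hU : U' ⊆ U) : IsLight k N L X U' where
  disjoint := h.disjoint.mono_right hU
  deficiency_le u hu := h.deficiency_le u (hU hu)
  weight_lt := (weight_mono_right hU).trans_lt h.weight_lt

theorem insert_erase [DecidableEq V] {u : V} (h : IsLight k N L X U) (hu : u ∈ U)
    (hk : deficiency N L u = k) : IsLight k N L (insert u X) (U.erase u) where
  disjoint := disjoint_insert_left.2
    ⟨notMem_erase u U, h.disjoint.mono_right (erase_subset u U)⟩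
  deficiency_le v hv := h.deficiency_le v (mem_of_mem_erase hv)
  weight_lt := (weight_insert_erase (disjoint_right.1 h.disjoint hu) hu hk).trans_lt h.weight_lt

theorem strikeColor_erase [DecidableEq V] [DecidableEq α] [DecidableRel G.Adj] {y : V} (a : α)
    (h : IsLight k N L X U) (hk : ∀ u ∈ U, deficiency N L u < k) (hy : y ∈ X)
    (hyU : #{u ∈ U | G.Adj u y} ≤ k) : IsLight k N (strikeColor G L y a) (X.erase y) U where
  disjoint := h.disjoint.mono_left (erase_subset y X)
  deficiency_le u hu := calc
    deficiency N (strikeColor G L y a) u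
      ≤ deficiency N L u + if G.Adj u y then 1 else 0 := deficiency_strikeColor_le y a u
    _ ≤ deficiency N L u + 1 := by gcongr; split_ifs <;> simp
    _ ≤ k := hk u hu
  weight_lt := (weight_strikeColor_erase_le a hy hyU).trans_lt h.weight_lt

theorem inter_union_cut [DecidableEq V] (h : IsLight k N L X U)
    (hA : weight k N L (X ∩ A) (U ∩ A) < k ^ 2) (hcut : #((X ∪ U) \ (A ∪ B)) ≤ k) :
    IsLight k N L (X ∩ A ∪ (X ∪ U) \ (A ∪ B)) (U ∩ A) where
  disjoint := by
    have := h.disjoint.mono (inter_subset_left (s₂ := A)) (inter_subset_left (s₂ := A))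
    refine disjoint_union_left.2 ⟨this, disjoint_left.2 ?_⟩
    grind
  deficiency_le u hu := h.deficiency_le u (mem_of_mem_inter_left hu)
  weight_lt := calc
    weight k N L (X ∩ A ∪ (X ∪ U) \ (A ∪ B)) (U ∩ A)
      ≤ weight k N L (X ∩ A) (U ∩ A) + k * #((X ∪ U) \ (A ∪ B)) := weight_union_left_le _
    _ < k ^ 2 + k * k := add_lt_add_of_lt_of_le hA (Nat.mul_le_mul_left k hcut)
    _ = 2 * k ^ 2 := by ring

theorem exists_isSeparation_weight_lt [DecidableEq V] (h : IsLight k N L X U)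
    (hcard : k + 1 < #(X ∪ U))
    (hconn : ¬ KConnected (G.induce ((X ∪ U : Finset V) : Set V)) (k + 1)) :
    ∃ A B, IsSeparation G (X ∪ U) A B ∧ #((X ∪ U) \ (A ∪ B)) ≤ k ∧
      weight k N L (X ∩ A) (U ∩ A) < k ^ 2 := by
  obtain ⟨A, B, hAB, hcut⟩ := exists_isSeparation_of_not_kConnected hcard hconn
  by_cases hA : weight k N L (X ∩ A) (U ∩ A) < k ^ 2
  · exact ⟨A, B, hAB, Nat.le_of_lt_succ hcut, hA⟩
  · refine ⟨B, A, hAB.symm, Nat.le_of_lt_succ (union_comm A B ▸ hcut), ?_⟩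
    have := weight_inter_add_weight_inter_le (k := k) (N := N) (L := L) (X := X) (U := U)
      hAB.disjoint
    have := h.weight_lt
    omega

theorem hasExtension {L : V → Finset ℕ} {c : V → ℕ} (hN : 3 * k ≤ N + 1)
    (hG : ∀ W : Finset V, N + 1 < #W + k → KConnected (G.induce (W : Set V)) (k + 1) →
      Choosable (G.induce (W : Set V)) (N + 2 - 3 * k))
    (h : IsLight k N L X U) : HasExtension G L c X U := by
  classical
  induction hs : 2 * #U + #X using Nat.strong_induction_on generalizing X U L c with
  | _ s ih
  subst hs
  by_cases hfull : ∃ u ∈ U, deficiency N L u = k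
  · obtain ⟨u, hu, huk⟩ := hfull
    have hlight := h.insert_erase hu huk
    have hX := card_insert_of_notMem (disjoint_right.1 h.disjoint hu)
    have hU := card_erase_add_one hu
    have hXk := hlight.card_lt
    refine .of_erase h.disjoint hu ?_ fun c' ↦ ih _ (by omega) hlight rfl
    unfold deficiency at huk
    omega
  have hdef : ∀ u ∈ U, deficiency N L u < k := fun u hu ↦
    (h.deficiency_le u hu).lt_of_ne fun huk ↦ hfull ⟨u, hu, huk⟩
  by_cases hlow : ∃ y ∈ X, #{u ∈ U | G.Adj u y} ≤ k
  · obtain ⟨y, hy, hyU⟩ := hlow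
    have := card_erase_add_one hy
    exact .of_strikeColor (ih _ (by omega) (h.strikeColor_erase (c y) hdef hy hyU) rfl)
  push Not at hlow
  have hX := h.card_lt
  unfold deficiency at hdef
  have hcard : #(X ∪ U) = #X + #U := card_union_of_disjoint h.disjoint
  rcases le_or_gt (#X + #U + k) (N + 1) with hsmall | hlarge
  · exact hasExtension_of_card_add_card_le h.disjoint fun u hu ↦ by have := hdef u hu; omega
  by_cases hconn : KConnected (G.induce ((X ∪ U : Finset V) : Set V)) (k + 1)
  · have hU := (hG _ (by omega) hconn).of_isContained
      (G.induceHomOfLE (s := (U : Set V)) (by simp)).isContained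
    exact .of_choosable hU fun u hu ↦ by have := hdef u hu; omega
  obtain ⟨A, B, hAB, hcut, hA⟩ := h.exists_isSeparation_weight_lt (by omega) hconn
  have hUA : 0 < #(U ∩ A) := (hAB.inter_nonempty hcut hlow).card_pos
  have hUsplit : #(U \ A) + #(U ∩ A) = #U := card_sdiff_add_card_inter U A
  refine hAB.hasExtension h.disjoint (ih _ (by omega) (h.mono_right sdiff_subset) rfl) fun c' ↦ ?_
  exact ih _ (hAB.two_mul_card_add_card_lt h.disjoint) (h.inter_union_cut hA hcut) rfl

end IsLight

end Light

theorem choosable_of_forall_kConnected {G : SimpleGraph V} {k N : ℕ} (hk : 1 ≤ k)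
    (hN : 3 * k ≤ N + 1)
    (hG : ∀ W : Finset V, N + 1 < #W + k → KConnected (G.induce (W : Set V)) (k + 1) →
      Choosable (G.induce (W : Set V)) (N + 2 - 3 * k)) :
    Choosable G N := by
  intro L hL
  refine exists_listColoring_of_forall_finset fun U ↦ ?_
  have hlight : IsLight k N L ∅ U :=
    { disjoint := disjoint_empty_left U
      deficiency_le := by simp [deficiency, hL]
      weight_lt := by
        have : 0 < 2 * k ^ 2 := by positivity
        simpa [weight, deficiency, hL] using this }
  obtain ⟨f, hfL, hf, -⟩ := hlight.hasExtension hN hG (c := fun _ ↦ 0)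
  exact ⟨f, hfL, hf⟩

theorem conn_subgraph_choosability_general (k : ℕ) (hk : 1 ≤ k) (G : SimpleGraph V) (n : ℕ)
    (hn : n ∈ lowerBounds {m | Choosable G m}) (h3 : 3 * k ≤ n) :
    ∃ H : G.Subgraph, KConnected H.coe (k + 1) ∧ n - k < Nat.card H.verts ∧
      ∀ m, Choosable H.coe m → n - 3 * k + 2 ≤ m := by
  by_contra! hH
  have hG : Choosable G (n - 1) := by
    refine choosable_of_forall_kConnected hk (by omega) fun W hW hconn ↦ ?_
    rw [induce_eq_coe_induce_top] at hconn ⊢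
    obtain ⟨m, hm, hmn⟩ := hH _ hconn (by simp; omega)
    exact hm.mono (by omega)
  have : n ≤ n - 1 := hn hG
  omega

/-- For every `k ≥ 1`, every graph `G` with choosability `χ_ℓ(G) = n ≥ 3k` contains a
`(k+1)`-connected subgraph `H` with more than `n − k` vertices and
`χ_ℓ(H) ≥ n − 3k + 2`. -/
theorem conn_subgraph_choosability [Fintype V] (k : ℕ) (hk : 1 ≤ k)
    (G : SimpleGraph V) (n : ℕ) (hn : IsLeast {m | Choosable G m} n) (h3 : 3 * k ≤ n) :
    ∃ H : G.Subgraph, KConnected H.coe (k + 1) ∧ n - k < Nat.card H.verts ∧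
      ∀ m, Choosable H.coe m → n - 3 * k + 2 ≤ m :=
  conn_subgraph_choosability_general k hk G n hn.2 h3
end
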